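/- For every odd prime p and every ε ∈ (0,1], there exist a positive integer n1(p,ε) and c(p,ε) ∈ (0,1] such that the following holds. For every n ≥ n1(p,ε) and every set S ⊆ F_p^n with |S| ≥ ε·p^n, the set S contains at least c(p,ε)·p^{2n} nontrivial lines; that is, Pr_{x ∈ F_p^n, y ∈ F_p^n \ {0}}[{x + λy : λ ∈ F_p} ⊆ S] ≥ c(p,ε), where x and y are independent and uniform. -/

import Mathlib

noncomputable section VL

namespace VL

/-- average over a finite type -/
def Av {Ω : Type*} (f : Ω → ℝ) : ℝ := (∑ᶠ x, f x) / Nat.card Ω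

open Classical in
/-- indicator of a proposition -/
def ind (P : Prop) : ℝ := if P then 1 else 0

lemma ind_nonneg (P : Prop) : 0 ≤ ind P := by unfold ind; split_ifs <;> norm_num
lemma ind_le_one (P : Prop) : ind P ≤ 1 := by unfold ind; split_ifs <;> norm_num
lemma ind_true {P : Prop} (h : P) : ind P = 1 := by simp [ind, h]
lemma ind_false {P : Prop} (h : ¬ P) : ind P = 0 := by simp [ind, h]
lemma ind_not (P : Prop) : ind (¬ P) = 1 - ind P := by
  by_cases h : P <;> simp [ind, h]
lemma ind_and (P Q : Prop) : ind (P ∧ Q) = ind P * ind Q := by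
  by_cases h : P <;> by_cases h' : Q <;> simp [ind, h, h']
lemma ind_mono {P Q : Prop} (h : P → Q) : ind P ≤ ind Q := by
  by_cases hp : P
  · rw [ind_true hp, ind_true (h hp)]
  · rw [ind_false hp]; exact ind_nonneg _

section
variable {Ω Ω' : Type*}

lemma Av_eq [Fintype Ω] (f : Ω → ℝ) : Av f = (∑ x, f x) / Fintype.card Ω := by
  rw [Av, finsum_eq_sum_of_fintype, Nat.card_eq_fintype_card]

lemma Av_mono [Finite Ω] {f g : Ω → ℝ} (h : ∀ x, f x ≤ g x) : Av f ≤ Av g := by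
  have := Fintype.ofFinite Ω
  rw [Av_eq, Av_eq]
  gcongr with x
  exact h x

lemma Av_add [Finite Ω] (f g : Ω → ℝ) : Av (fun x => f x + g x) = Av f + Av g := by
  have := Fintype.ofFinite Ω
  rw [Av_eq, Av_eq, Av_eq, Finset.sum_add_distrib, add_div]

lemma Av_sub [Finite Ω] (f g : Ω → ℝ) : Av (fun x => f x - g x) = Av f - Av g := by
  have := Fintype.ofFinite Ω
  rw [Av_eq, Av_eq, Av_eq, Finset.sum_sub_distrib, sub_div]

lemma Av_mul [Finite Ω] (c : ℝ) (f : Ω → ℝ) : Av (fun x => c * f x) = c * Av f := by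
  have := Fintype.ofFinite Ω
  rw [Av_eq, Av_eq, ← Finset.mul_sum, mul_div_assoc]

lemma Av_const [Finite Ω] [Nonempty Ω] (c : ℝ) : Av (fun _ : Ω => c) = c := by
  have := Fintype.ofFinite Ω
  rw [Av_eq]
  have : (Fintype.card Ω : ℝ) ≠ 0 := by exact_mod_cast Fintype.card_ne_zero
  simp

lemma Av_empty [IsEmpty Ω] (f : Ω → ℝ) : Av f = 0 := by
  simp [Av]

lemma Av_nonneg [Finite Ω] {f : Ω → ℝ} (h : ∀ x, 0 ≤ f x) : 0 ≤ Av f := by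
  have := Fintype.ofFinite Ω
  rw [Av_eq]
  exact div_nonneg (Finset.sum_nonneg fun x _ => h x) (by positivity)

lemma Av_nonpos [Finite Ω] {f : Ω → ℝ} (h : ∀ x, f x ≤ 0) : Av f ≤ 0 := by
  have := Fintype.ofFinite Ω
  rw [Av_eq]
  exact div_nonpos_of_nonpos_of_nonneg (Finset.sum_nonpos fun x _ => h x) (by positivity)

lemma Av_le [Finite Ω] [Nonempty Ω] {f : Ω → ℝ} {c : ℝ} (h : ∀ x, f x ≤ c) : Av f ≤ c := by
  rw [← Av_const (Ω := Ω) c]; exact Av_mono h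

lemma le_Av [Finite Ω] [Nonempty Ω] {f : Ω → ℝ} {c : ℝ} (h : ∀ x, c ≤ f x) : c ≤ Av f := by
  rw [← Av_const (Ω := Ω) c]; exact Av_mono h

lemma Av_le_one [Finite Ω] {f : Ω → ℝ} (h : ∀ x, f x ≤ 1) : Av f ≤ 1 := by
  cases isEmpty_or_nonempty Ω
  · rw [Av_empty]; norm_num
  · exact Av_le h

lemma exists_le_of_le_Av [Finite Ω] [Nonempty Ω] {f : Ω → ℝ} {c : ℝ} (h : c ≤ Av f) :
    ∃ x, c ≤ f x := by
  have := Fintype.ofFinite Ω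
  by_contra hh
  push Not at hh
  have : Av f < c := by
    rw [Av_eq, div_lt_iff₀ (by exact_mod_cast Fintype.card_pos)]
    calc ∑ x, f x < ∑ _x : Ω, c :=
          Finset.sum_lt_sum_of_nonempty Finset.univ_nonempty fun x _ => hh x
      _ = _ := by simp [mul_comm]
  linarith

lemma Av_comm [Finite Ω] [Finite Ω'] (f : Ω → Ω' → ℝ) :
    Av (fun x => Av fun y => f x y) = Av (fun y => Av fun x => f x y) := by
  have := Fintype.ofFinite Ω
  have := Fintype.ofFinite Ω'
  simp only [Av_eq]
  rw [← Finset.sum_div, ← Finset.sum_div, Finset.sum_comm, div_right_comm]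

lemma Av_equiv [Finite Ω] [Finite Ω'] (e : Ω ≃ Ω') (f : Ω' → ℝ) :
    Av (fun x => f (e x)) = Av f := by
  have := Fintype.ofFinite Ω
  have := Fintype.ofFinite Ω'
  rw [Av_eq, Av_eq, Fintype.card_congr e, Equiv.sum_comp]

lemma Av_prod [Finite Ω] [Finite Ω'] (f : Ω × Ω' → ℝ) :
    Av f = Av (fun x => Av fun y => f (x, y)) := by
  have := Fintype.ofFinite Ω
  have := Fintype.ofFinite Ω'
  simp only [Av_eq]
  rw [← Finset.sum_div, Fintype.sum_prod_type, Fintype.card_prod, div_div, mul_comm]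
  push_cast
  rfl

lemma Av_sum {ι κ β : Type*} [Finite ι] [Finite κ] [Finite β] (f : (ι ⊕ κ → β) → ℝ) :
    Av f = Av (fun x : ι → β => Av fun y : κ → β => f (Sum.elim x y)) := by
  rw [← Av_equiv (Equiv.sumArrowEquivProdArrow ι κ β).symm, Av_prod]
  rfl

/-- resampling -/
lemma Av_resample [Finite Ω] [Finite Ω'] [Nonempty Ω'] (put : Ω → Ω' → Ω) (get : Ω → Ω')
    (h1 : ∀ x y, get (put x y) = y) (h2 : ∀ x y, put (put x y) (get x) = x) (f : Ω → ℝ) :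
    Av (fun x => Av fun y => f (put x y)) = Av f := by
  let e : Ω × Ω' ≃ Ω × Ω' :=
    { toFun := fun z => (put z.1 z.2, get z.1)
      invFun := fun z => (put z.1 z.2, get z.1)
      left_inv := fun z => by simp [h1, h2]
      right_inv := fun z => by simp [h1, h2] }
  have := Av_equiv e (fun z => f z.1)
  rw [Av_prod, Av_prod] at this
  simp only [Av_const] at this
  exact this

lemma Av_pigeon {K : Type*} [Finite Ω] [Finite K] {P : Ω → Prop} {Q : K → Ω → Prop} {c : ℝ}
    (hc : 0 < c) (h : c ≤ Av fun x => ind (P x)) (hPQ : ∀ x, P x → ∃ k, Q k x) :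
    ∃ k, c / Nat.card K ≤ Av fun x => ind (Q k x) := by
  have := Fintype.ofFinite Ω
  have := Fintype.ofFinite K
  have hne : Nonempty K := by
    by_contra hK
    rw [not_nonempty_iff] at hK
    have : Av (fun x => ind (P x)) ≤ 0 := Av_nonpos fun x => by
      rw [ind_false]; intro hx; obtain ⟨k, _⟩ := hPQ x hx; exact hK.elim k
    linarith
  apply exists_le_of_le_Av
  rw [Av_comm]
  have : c / Nat.card K ≤ Av (fun x => (1 / (Nat.card K : ℝ)) * ind (P x)) := by
    rw [Av_mul, div_eq_mul_inv, one_div, mul_comm]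
    gcongr
  refine this.trans (Av_mono fun x => ?_)
  by_cases hx : P x
  · obtain ⟨k, hk⟩ := hPQ x hx
    rw [ind_true hx, Av_eq, Nat.card_eq_fintype_card, mul_one]
    gcongr
    calc (1 : ℝ) = ind (Q k x) := (ind_true hk).symm
      _ ≤ _ := Finset.single_le_sum (f := fun k => ind (Q k x)) (fun i _ => ind_nonneg _)
        (Finset.mem_univ k)
  · rw [ind_false hx, mul_zero]
    exact Av_nonneg fun _ => ind_nonneg _

/-- Markov -/
lemma Av_markov [Finite Ω] [Nonempty Ω] {d : Ω → ℝ} {c c' : ℝ} (hc : c ≤ Av d)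
    (hd : ∀ x, d x ≤ 1) (hc' : 0 ≤ c') :
    c - c' ≤ Av fun x => ind (c' ≤ d x) := by
  have : Av (fun x => d x - c') ≤ Av fun x => ind (c' ≤ d x) := Av_mono fun x => by
    by_cases h : c' ≤ d x
    · rw [ind_true h]; linarith [hd x]
    · rw [ind_false h]; linarith
  rw [Av_sub, Av_const] at this
  linarith

end

section
variable {α ι η ζ : Type*}

/-- the point of a combinatorial subspace with given parameters -/
def ap (f : ι → α ⊕ η) (x : η → α) : ι → α := fun i => Sum.elim id x (f i)

/-- each parameter occurs -/
def Pr (f : ι → α ⊕ η) : Prop := ∀ e, ∃ i, f i = Sum.inr e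

/-- composition -/
def cp (f : ι → α ⊕ η) (g : η → α ⊕ ζ) : ι → α ⊕ ζ := fun i => Sum.elim Sum.inl g (f i)

lemma ap_cp (f : ι → α ⊕ η) (g : η → α ⊕ ζ) (x : ζ → α) : ap (cp f g) x = ap f (ap g x) := by
  funext i
  simp only [ap, cp]
  cases f i <;> rfl

lemma Pr_cp {f : ι → α ⊕ η} {g : η → α ⊕ ζ} (hf : Pr f) (hg : Pr g) : Pr (cp f g) := by
  intro e
  obtain ⟨j, hj⟩ := hg e
  obtain ⟨i, hi⟩ := hf j
  exact ⟨i, by simp [cp, hi, hj]⟩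

lemma ap_inj {f : ι → α ⊕ η} (hf : Pr f) : Function.Injective (ap f) := by
  intro x y h
  funext e
  obtain ⟨i, hi⟩ := hf e
  have := congrFun h i
  simpa [ap, hi] using this

/-- `A` contains a combinatorial line -/
def HasLine (A : Set (ι → α)) : Prop :=
  ∃ f : ι → Option α, (∃ i, f i = none) ∧ ∀ a, (fun i => (f i).getD a) ∈ A

lemma HasLine.comp {f : ι → α ⊕ η} (hf : Pr f) {A : Set (ι → α)}
    (h : HasLine {x | ap f x ∈ A}) : HasLine A := by
  obtain ⟨l, ⟨e, he⟩, hl⟩ := h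
  obtain ⟨i, hi⟩ := hf e
  refine ⟨fun i => Sum.elim some l (f i), ⟨i, by simp [hi, he]⟩, fun a => ?_⟩
  have h := hl a
  rw [Set.mem_ofPred_eq] at h
  convert h using 1
  funext i
  simp only [ap]
  cases f i <;> rfl

end

/-- density Hales-Jewett -/
def DHJ (α : Type) (δ : ℝ) : Prop :=
  ∃ (ι : Type) (_ : Finite ι), ∀ A : Set (ι → α), δ ≤ Av (fun x => ind (x ∈ A)) → HasLine A

/-- multidimensional density Hales-Jewett -/
def MDHJ (α η : Type) (δ : ℝ) : Prop :=
  ∃ (ι : Type) (_ : Finite ι), ∀ A : Set (ι → α), δ ≤ Av (fun x => ind (x ∈ A)) →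
    ∃ f : ι → α ⊕ η, Pr f ∧ ∀ x, ap f x ∈ A

lemma mdhj_fin {α : Type} [Finite α] (h : ∀ δ > 0, DHJ α δ) (r : ℕ) :
    ∀ δ > 0, MDHJ α (Fin r) δ := by
  induction r with
  | zero =>
    intro δ hδ
    refine ⟨Empty, inferInstance, fun A hA => ⟨fun e => e.elim, fun e => e.elim0, fun x => ?_⟩⟩
    obtain ⟨y, hy⟩ := exists_le_of_le_Av hA
    have hy' : y ∈ A := by
      by_contra hh
      rw [ind_false hh] at hy
      linarith
    convert hy'
  | succ r ih =>
    intro δ hδ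
    obtain ⟨ι, _, hι⟩ := h (δ / 2) (by linarith)
    set K := Nat.card (ι → Option α)
    have hK : 0 < K := Nat.card_pos
    obtain ⟨κ, _, hκ⟩ := ih (δ / 2 / K) (by positivity)
    refine ⟨ι ⊕ κ, inferInstance, fun A hA => ?_⟩
    rw [Av_sum, Av_comm] at hA
    have hne : Nonempty (κ → α) := by
      by_contra hh
      rw [not_nonempty_iff] at hh
      rw [Av_empty] at hA
      linarith
    have h1 := Av_markov hA (fun y => Av_le_one fun x => ind_le_one _)
      (show (0 : ℝ) ≤ δ / 2 by linarith)
    rw [show δ - δ / 2 = δ / 2 by ring] at h1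
    obtain ⟨l, hl⟩ := Av_pigeon (K := ι → Option α)
      (Q := fun l y => (∃ i, l i = none) ∧ ∀ a, Sum.elim (fun i => (l i).getD a) y ∈ A)
      (by linarith) h1 (fun y hy => hι {x | Sum.elim x y ∈ A} hy)
    obtain ⟨f, hf, hfA⟩ := hκ {y | (∃ i, l i = none) ∧
      ∀ a, Sum.elim (fun i => (l i).getD a) y ∈ A} hl
    have hex : ∃ i, l i = none := by
      have : Nonempty (Fin r → α) := by
        rcases isEmpty_or_nonempty α with h0 | ⟨⟨a⟩⟩
        · rcases isEmpty_or_nonempty (Fin r) with h3 | ⟨⟨e⟩⟩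
          · exact ⟨fun i => isEmptyElim i⟩
          · obtain ⟨i, hi⟩ := hf e
            obtain ⟨y⟩ := hne
            exact h0.elim (y i)
        · exact ⟨fun _ => a⟩
      obtain ⟨x⟩ := this
      exact (hfA x).1
    refine ⟨Sum.elim (fun i => (l i).elim (Sum.inr 0) Sum.inl)
      (fun j => Sum.map id Fin.succ (f j)), ?_, ?_⟩
    · intro e
      refine Fin.cases ?_ (fun e => ?_) e
      · obtain ⟨i, hi⟩ := hex
        exact ⟨Sum.inl i, by simp [hi]⟩
      · obtain ⟨i, hi⟩ := hf e
        exact ⟨Sum.inr i, by simp [hi]⟩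
    · intro x
      have := (hfA (fun e => x e.succ)).2 (x 0)
      convert this using 1
      funext i
      rcases i with i | j
      · simp only [ap, Sum.elim_inl]
        cases l i <;> rfl
      · simp only [ap, Sum.elim_inr]
        cases f j <;> rfl

lemma mdhj {α : Type} [Finite α] (h : ∀ δ > 0, DHJ α δ) (η : Type) [Finite η] :
    ∀ δ > 0, MDHJ α η δ := by
  intro δ hδ
  obtain ⟨n, ⟨e⟩⟩ := Finite.exists_equiv_fin η
  obtain ⟨ι, _, hι⟩ := mdhj_fin h n δ hδ
  refine ⟨ι, inferInstance, fun A hA => ?_⟩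
  obtain ⟨f, hf, hfA⟩ := hι A hA
  refine ⟨fun i => Sum.map id e.symm (f i), fun x => ?_, fun x => ?_⟩
  · obtain ⟨i, hi⟩ := hf (e x)
    exact ⟨i, by simp [hi]⟩
  · convert hfA (fun j => x (e.symm j)) using 1
    funext i
    simp only [ap]
    cases f i <;> rfl


lemma Av_update {ι α : Type*} [Finite ι] [Finite α] [Nonempty α] [DecidableEq ι] (l : ι)
    (G : (ι → α) → ℝ) :
    Av (fun w => Av fun a => G (Function.update w l a)) = Av G :=
  Av_resample (fun w a => Function.update w l a) (fun w => w l) (by simp) (by simp) G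

/-- `k 1[w_l = t] - 1` -/
def Z {ι α : Type*} (t : α) (l : ι) (w : ι → α) : ℝ := Nat.card α * ind (w l = t) - 1

lemma Av_ind_eq {α : Type*} [Finite α] (t : α) (f : α → ℝ) :
    Av (fun a => (Nat.card α * ind (a = t)) * f a) = f t := by
  have := Fintype.ofFinite α
  have h0 : (Fintype.card α : ℝ) ≠ 0 := by
    have : Nonempty α := ⟨t⟩
    exact_mod_cast Fintype.card_ne_zero
  classical
  rw [Av_eq, Finset.sum_eq_single t]
  · rw [ind_true rfl, Nat.card_eq_fintype_card]
    field_simp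
  · intro b _ hb
    rw [ind_false hb]; ring
  · simp

lemma Av_Z {ι α : Type*} [Finite ι] [Finite α] [DecidableEq ι] (t : α) (l : ι)
    (G : (ι → α) → ℝ) :
    Av (fun w => Z t l w * G w) = Av (fun w => G (Function.update w l t)) - Av G := by
  have : Nonempty α := ⟨t⟩
  have h1 : Av (fun w => (Nat.card α * ind (w l = t)) * G w)
      = Av (fun w => G (Function.update w l t)) := by
    rw [← Av_update l]
    congr 1
    funext w
    rw [← Av_ind_eq t (fun a => G (Function.update w l a))]
    simp
  rw [← h1, ← Av_sub]
  congr 1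
  funext w
  rw [Z]; ring

lemma Av_ZZ {ι α : Type*} [Finite ι] [Finite α] [DecidableEq ι] (t : α) {l l' : ι} (h : l ≠ l') :
    Av (fun w => Z t l w * Z t l' w) = 0 := by
  rw [Av_Z]
  have : (fun w : ι → α => Z t l' (Function.update w l t)) = fun w => Z t l' w := by
    funext w
    simp [Z, h.symm]
  rw [this, sub_self]

lemma Av_Zsq {ι α : Type*} [Finite ι] [Finite α] [DecidableEq ι] (t : α) (l : ι) :
    Av (fun w => Z t l w * Z t l w) ≤ Nat.card α := by
  have : Nonempty α := ⟨t⟩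
  rw [Av_Z]
  have h1 : Av (fun w : ι → α => Z t l w * 1) = 0 := by
    rw [Av_Z]; simp
  simp only [mul_one] at h1
  rw [h1, sub_zero]
  apply Av_le
  intro w
  simp [Z, ind_true]

lemma Av_fsum {Ω κ : Type*} [Finite Ω] (s : Finset κ) (F : κ → Ω → ℝ) :
    Av (fun x => ∑ k ∈ s, F k x) = ∑ k ∈ s, Av (F k) := by
  have := Fintype.ofFinite Ω
  simp only [Av_eq]
  rw [Finset.sum_comm, Finset.sum_div]

lemma sprinkle_one (α : Type) [Finite α] {ε : ℝ} (hε : 0 < ε) :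
    ∃ (L : ℕ), 0 < L ∧ ∀ t : α, ∀ h : (Fin L → α) → ℝ, (∀ x, 0 ≤ h x) → (∀ x, h x ≤ 1) →
      Av h - ε ≤ Av (fun l : Fin L => Av fun w : Fin L → α => h (Function.update w l t)) := by
  obtain ⟨L, hL⟩ := exists_nat_gt (Nat.card α / ε ^ 2)
  have hL0 : (0 : ℝ) < L := lt_of_le_of_lt (by positivity) hL
  refine ⟨L, by exact_mod_cast hL0, fun t h h0 h1 => ?_⟩
  have : Nonempty α := ⟨t⟩
  have : Nonempty (Fin L) := ⟨⟨0, by exact_mod_cast hL0⟩⟩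
  set S : (Fin L → α) → ℝ := fun w => (∑ l, Z t l w) / L with hS
  have e1 : Av (fun l : Fin L => Av fun w : Fin L → α => h (Function.update w l t)) - Av h
      = Av (fun w => S w * h w) := by
    have : ∀ l : Fin L, Av (fun w : Fin L → α => h (Function.update w l t))
      = Av (fun w => Z t l w * h w) + Av h := fun l => by rw [Av_Z]; ring
    simp only [this]
    rw [Av_add, Av_const, add_sub_cancel_right, Av_comm]
    congr 1
    funext w
    rw [Av_eq, ← Finset.sum_mul, hS]
    simp
    ring
  have e2 : Av (fun w => S w * S w) ≤ Nat.card α / L := by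
    have : (fun w => S w * S w) = fun w => (1 / (L : ℝ) ^ 2) *
        ∑ l, ∑ l', Z t l w * Z t l' w := by
      funext w
      rw [hS, ← Finset.sum_mul_sum]
      field_simp
    rw [this, Av_mul, Av_fsum]
    have h2 : ∀ l : Fin L, Av (fun w => ∑ l', Z t l w * Z t l' w) ≤ Nat.card α := by
      intro l
      rw [Av_fsum, Finset.sum_eq_single l]
      · exact Av_Zsq t l
      · intro b _ hb; exact Av_ZZ t hb.symm
      · simp
    calc _ ≤ (1 / (L : ℝ) ^ 2) * ∑ l : Fin L, (Nat.card α : ℝ) := by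
          gcongr with l; exact h2 l
      _ = _ := by simp; field_simp
  have e3 : Nat.card α / L ≤ ε ^ 2 := by
    rw [div_lt_iff₀ (by positivity)] at hL
    rw [div_le_iff₀ hL0]; linarith
  have e4 : Av (fun w => (-ε / 2) - (1 / (2 * ε)) * (S w * S w)) ≤ Av (fun w => S w * h w) := by
    apply Av_mono
    intro w
    have h2 : h w ^ 2 ≤ 1 := by nlinarith [h0 w, h1 w]
    have : 0 ≤ (S w + ε * h w) ^ 2 / (2 * ε) := by positivity
    have e : (S w + ε * h w) ^ 2 / (2 * ε)
      = (1 / (2 * ε)) * (S w * S w) + S w * h w + ε / 2 * h w ^ 2 := by field_simp; ring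
    rw [e] at this
    nlinarith
  rw [Av_sub, Av_const, Av_mul] at e4
  have e5 : (1 / (2 * ε)) * Av (fun w => S w * S w) ≤ (1 / (2 * ε)) * ε ^ 2 := by
    gcongr; linarith
  have e6 : (1 / (2 * ε)) * ε ^ 2 = ε / 2 := by field_simp
  linarith

lemma sprinkle_fin (α : Type) [Finite α] [Nonempty α] (r : ℕ) :
    ∀ ε : ℝ, 0 < ε → ∃ (ι Ω : Type) (_ : Finite ι) (_ : Finite Ω) (_ : Nonempty Ω)
      (V : Ω → ι → α ⊕ Fin r), (∀ ω, Pr (V ω)) ∧ ∀ t : Fin r → α, ∀ h : (ι → α) → ℝ,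
      (∀ x, 0 ≤ h x) → (∀ x, h x ≤ 1) → Av h - ε ≤ Av fun ω => h (ap (V ω) t) := by
  induction r with
  | zero =>
    intro ε hε
    refine ⟨Empty, Unit, inferInstance, inferInstance, inferInstance, fun _ e => e.elim,
      fun _ e => e.elim0, fun t h h0 h1 => ?_⟩
    have : ∀ x : Empty → α, h x = h (fun e => e.elim) := fun x => by
      congr 1; funext e; exact e.elim
    have e1 : Av h = h (fun e => e.elim) := by
      rw [show h = fun _ => h (fun e => e.elim) from funext this, Av_const]
    have e2 : ∀ ω : Unit, h (ap (fun e : Empty => (e.elim : α ⊕ Fin 0)) t)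
      = h (fun e => e.elim) := fun ω => this _
    rw [show (fun ω : Unit => h (ap (fun e : Empty => (e.elim : α ⊕ Fin 0)) t))
      = fun _ => h (fun e => e.elim) from funext e2, Av_const, e1]
    linarith
  | succ r ih =>
    intro ε hε
    obtain ⟨κ, Ω, _, _, _, V, hV, hV'⟩ := ih (ε / 2) (by linarith)
    obtain ⟨L, hL, hL'⟩ := sprinkle_one α (ε := ε / 2) (by linarith)
    have : Nonempty (Fin L) := ⟨⟨0, hL⟩⟩
    refine ⟨Fin L ⊕ κ, (Fin L × (Fin L → α)) × Ω, inferInstance, inferInstance, inferInstance,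
      fun ω => Sum.elim (fun i => if i = ω.1.1 then Sum.inr 0 else Sum.inl (ω.1.2 i))
      (fun j => Sum.map id Fin.succ (V ω.2 j)), ?_, ?_⟩
    · intro ω e
      refine Fin.cases ?_ (fun e => ?_) e
      · exact ⟨Sum.inl ω.1.1, by simp⟩
      · obtain ⟨i, hi⟩ := hV ω.2 e
        exact ⟨Sum.inr i, by simp [hi]⟩
    · intro t h h0 h1
      have key : ∀ ω : (Fin L × (Fin L → α)) × Ω,
        ap (Sum.elim (fun i => if i = ω.1.1 then Sum.inr 0 else Sum.inl (ω.1.2 i))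
          (fun j => Sum.map id Fin.succ (V ω.2 j))) t
        = Sum.elim (Function.update ω.1.2 ω.1.1 (t 0)) (ap (V ω.2) (fun e => t e.succ)) := by
        intro ω
        funext i
        rcases i with i | j
        · simp only [ap, Sum.elim_inl, Function.update_apply]
          split_ifs <;> rfl
        · simp only [ap, Sum.elim_inr]
          cases V ω.2 j <;> rfl
      simp only [key]
      rw [Av_prod, Av_prod, Av_sum]
      have a1 := hL' (t 0) (fun x => Av fun y => h (Sum.elim x y))
        (fun x => Av_nonneg fun y => h0 _) (fun x => Av_le_one fun y => h1 _)
      have a2 : Av (fun l : Fin L => Av fun w : Fin L → α =>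
          (Av fun y => h (Sum.elim (Function.update w l (t 0)) y)) - ε / 2) ≤
          Av (fun l : Fin L => Av fun w : Fin L → α =>
            Av fun ω => h (Sum.elim (Function.update w l (t 0)) (ap (V ω) (fun e => t e.succ)))) :=
        Av_mono fun l => Av_mono fun w => hV' (fun e => t e.succ)
          (fun y => h (Sum.elim (Function.update w l (t 0)) y)) (fun y => h0 _) (fun y => h1 _)
      simp only [Av_sub, Av_const] at a2
      linarith

lemma sprinkle (α : Type) [Finite α] [Nonempty α] (η : Type) [Finite η]
     (ε : ℝ) (hε : 0 < ε) : ∃ (ι Ω : Type) (_ : Finite ι) (_ : Finite Ω) (_ : Nonempty Ω)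
      (V : Ω → ι → α ⊕ η), (∀ ω, Pr (V ω)) ∧ ∀ t : η → α, ∀ A : Set (ι → α),
      Av (fun x => ind (x ∈ A)) - ε ≤ Av fun ω => ind (ap (V ω) t ∈ A) := by
  obtain ⟨n, ⟨e⟩⟩ := Finite.exists_equiv_fin η
  obtain ⟨ι, Ω, i1, i2, i3, V, hV, hV'⟩ := sprinkle_fin α n ε hε
  refine ⟨ι, Ω, i1, i2, i3, fun ω i => Sum.map id e.symm (V ω i), fun ω x => ?_, fun t A => ?_⟩
  · obtain ⟨i, hi⟩ := hV ω (e x)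
    exact ⟨i, by simp [hi]⟩
  · convert hV' (fun j => t (e.symm j)) (fun x => ind (x ∈ A)) (fun _ => ind_nonneg _)
      (fun _ => ind_le_one _) using 5
    funext i
    simp only [ap]
    cases V _ i <;> rfl

lemma ind_mul_le_one (P : Prop) {c : ℝ} (h : c ≤ 1) : ind P * c ≤ 1 := by
  by_cases hp : P
  · rw [ind_true hp]; linarith
  · rw [ind_false hp]; linarith

/-- replace the new letter by `a` -/
def gd {ι α : Type*} (a : α) (x : ι → Option α) : ι → α := fun i => (x i).getD a

lemma insens_sub {α η : Type} [Finite α] (hM : ∀ δ > 0, MDHJ α η δ) (a : α)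
    (ε : ℝ) (hε : 0 < ε) : ∃ (ι : Type) (_ : Finite ι), ∀ E : Set (ι → α),
      ε ≤ Av (fun t : ι → Option α => ind (gd a t ∈ E)) →
      ∃ f : ι → Option α ⊕ η, Pr f ∧ ∀ x, gd a (ap f x) ∈ E := by
  obtain ⟨κ, _, hκ⟩ := hM (ε / 2) (by linarith)
  obtain ⟨ι, Ω, _, _, _, V, hV, hV'⟩ := sprinkle (Option α) κ (ε / 2) (by linarith)
  have : Nonempty α := ⟨a⟩
  refine ⟨ι, inferInstance, fun E hE => ?_⟩
  have h1 : ε / 2 ≤ Av (fun t : κ → α => Av fun ω =>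
      ind (gd a (ap (V ω) (fun i => some (t i))) ∈ E)) := by
    apply le_Av
    intro t
    have := hV' (fun i => some (t i)) {x | gd a x ∈ E}
    simp only [Set.mem_ofPred_eq] at this
    linarith
  rw [Av_comm] at h1
  obtain ⟨ω, hω⟩ := exists_le_of_le_Av h1
  obtain ⟨h, hh, hhE⟩ := hκ {t | gd a (ap (V ω) (fun i => some (t i))) ∈ E} hω
  refine ⟨cp (V ω) (fun i => Sum.map some id (h i)), Pr_cp (hV ω) ?_, fun x => ?_⟩
  · intro e
    obtain ⟨i, hi⟩ := hh e
    exact ⟨i, by simp [hi]⟩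
  · have := hhE (gd a x)
    rw [Set.mem_ofPred_eq] at this
    convert this using 1
    rw [ap_cp]
    funext i
    simp only [gd, ap]
    rcases V ω i with c | e
    · rfl
    · simp only [Sum.elim_inr, Option.getD_some]
      show (Sum.elim id x (Sum.map some id (h e))).getD a = Sum.elim id (gd a x) (h e)
      cases h e <;> rfl

lemma part_step {α η : Type} [Finite α] [Finite η] (hM : ∀ δ > 0, MDHJ α η δ) (a : α)
    (ε : ℝ) (hε : 0 < ε) : ∃ θ : ℝ, 0 < θ ∧ θ ≤ 1 ∧ ∀ s : ℕ, ∃ (ι : Type) (_ : Finite ι),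
      ∀ (D : Set (ι → α)) (g : (ι → Option α) → ℝ), (∀ x, g x ≤ 1) →
      (∀ f : ι → Option α ⊕ η, Pr f → Av (fun x => g (ap f x)) ≤ 0) →
      Av (fun x => ind (gd a x ∈ D) * g x) ≤
        ε + (1 - θ) ^ s * Av (fun x => ind (gd a x ∈ D)) := by
  obtain ⟨κ, _, hκ⟩ := insens_sub hM a (ε / 2) (by linarith)
  have : Nonempty α := ⟨a⟩
  set K := Nat.card (κ → Option α ⊕ η) with hKd
  have hK : 0 < K := Nat.card_pos
  set N := Nat.card (κ → Option α) with hNd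
  have hN : 0 < N := Nat.card_pos
  set θ : ℝ := min 1 (ε / 2 / K / N) with hθd
  have hθ : 0 < θ := lt_min one_pos (by positivity)
  have hθ1 : θ ≤ 1 := min_le_left _ _
  refine ⟨θ, hθ, hθ1, fun s => ?_⟩
  induction s with
  | zero =>
    refine ⟨Empty, inferInstance, fun D g hg _ => ?_⟩
    have : Av (fun x : Empty → Option α => ind (gd a x ∈ D) * g x) ≤
      Av (fun x => ind (gd a x ∈ D)) := Av_mono fun x => by
        nlinarith [hg x, ind_nonneg (gd a x ∈ D)]
    simp only [pow_zero, one_mul]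
    linarith
  | succ s ih =>
    obtain ⟨ι, _, hι⟩ := ih
    refine ⟨κ ⊕ ι, inferInstance, fun D g hg hsub => ?_⟩
    have hDnn : 0 ≤ Av (fun x : κ ⊕ ι → Option α => ind (gd a x ∈ D)) :=
      Av_nonneg fun _ => ind_nonneg _
    have hpw : 0 ≤ (1 - θ) ^ s := pow_nonneg (by linarith) _
    by_cases hd : Av (fun x : κ ⊕ ι → Option α => ind (gd a x ∈ D)) < ε
    · have : Av (fun x : κ ⊕ ι → Option α => ind (gd a x ∈ D) * g x) ≤
        Av (fun x => ind (gd a x ∈ D)) := Av_mono fun x => by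
          nlinarith [hg x, ind_nonneg (gd a x ∈ D)]
      have : 0 ≤ (1 - θ) ^ (s + 1) * Av (fun x : κ ⊕ ι → Option α => ind (gd a x ∈ D)) :=
        mul_nonneg (pow_nonneg (by linarith) _) hDnn
      linarith
    push Not at hd
    have hgd : ∀ (t : κ → Option α) (y : ι → Option α),
        gd a (Sum.elim t y) = Sum.elim (gd a t) (gd a y) := by
      intro t y; funext i; cases i <;> rfl
    have hd' := hd
    rw [Av_sum, Av_comm] at hd'
    have h1 := Av_markov hd' (fun y => Av_le_one fun x => ind_le_one _)
      (show (0 : ℝ) ≤ ε / 2 by linarith)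
    rw [show ε - ε / 2 = ε / 2 by ring] at h1
    obtain ⟨f0, hf0⟩ := Av_pigeon (K := κ → Option α ⊕ η)
      (Q := fun f y => Pr f ∧ ∀ x, Sum.elim (gd a (ap f x)) (gd a y) ∈ D)
      (by linarith) h1 (fun y hy => by
        simp only [hgd] at hy
        exact hκ {t | Sum.elim t (gd a y) ∈ D} hy)
    have hpr : Pr f0 := by
      by_contra hh
      have : Av (fun y : ι → Option α =>
          ind (Pr f0 ∧ ∀ x, Sum.elim (gd a (ap f0 x)) (gd a y) ∈ D)) ≤ 0 :=
        Av_nonpos fun y => by rw [ind_false]; tauto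
      have : 0 < ε / 2 / K := by positivity
      linarith
    set Y : Set (ι → α) := {y | ∀ x, Sum.elim (gd a (ap f0 x)) y ∈ D} with hY
    have hYd : ε / 2 / K ≤ Av (fun y : ι → Option α => ind (gd a y ∈ Y)) :=
      hf0.trans (Av_mono fun y => ind_mono fun h => h.2)
    let R : (κ → Option α) → Prop := fun t => ∃ x, ap f0 x = t
    let D' : (κ → Option α) → Set (ι → α) := fun t => {y | Sum.elim (gd a t) y ∈ D ∧
      ¬ (R t ∧ y ∈ Y)}
    have hsplit : ∀ t y, ind (gd a (Sum.elim t y) ∈ D) =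
        ind (gd a y ∈ D' t) + ind (R t) * ind (gd a y ∈ Y) := by
      intro t y
      rw [hgd, ← ind_and]
      by_cases h : R t ∧ gd a y ∈ Y
      · have h2 : Sum.elim (gd a t) (gd a y) ∈ D := by
          obtain ⟨⟨x, rfl⟩, hy⟩ := h
          exact hy x
        rw [ind_true h, ind_true h2, ind_false (fun h3 => h3.2 h)]; ring
      · rw [ind_false h, add_zero]
        congr 1
        exact propext ⟨fun h2 => ⟨h2, h⟩, fun h2 => h2.1⟩
    -- fibres
    have hfib : ∀ t, Av (fun y => ind (gd a y ∈ D' t) * g (Sum.elim t y)) ≤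
        ε + (1 - θ) ^ s * Av (fun y => ind (gd a y ∈ D' t)) := by
      intro t
      apply hι (D' t) (fun y => g (Sum.elim t y)) (fun y => hg _)
      intro f hf
      have := hsub (Sum.elim (fun i => Sum.inl (t i)) f) (fun e => by
        obtain ⟨i, hi⟩ := hf e
        exact ⟨Sum.inr i, by simp [hi]⟩)
      convert this using 4
      funext i
      cases i <;> rfl
    -- removed part
    have hRsum : ∀ F : (κ → Option α) → ℝ, Av (fun t => ind (R t) * F t) =
        (Nat.card (η → Option α) / N : ℝ) * Av (fun x => F (ap f0 x)) := by
      intro F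
      have := Fintype.ofFinite (κ → Option α)
      have := Fintype.ofFinite (η → Option α)
      have hη : (Fintype.card (η → Option α) : ℝ) ≠ 0 := by exact_mod_cast Fintype.card_ne_zero
      rw [Av_eq, Av_eq, hNd, Nat.card_eq_fintype_card, Nat.card_eq_fintype_card]
      have : ∑ t, ind (R t) * F t = ∑ x, F (ap f0 x) := by
        classical
        rw [← Finset.sum_image (s := Finset.univ) (g := ap f0) (f := F)
          (fun x _ y _ h => ap_inj hpr h)]
        rw [← Finset.sum_subset (Finset.subset_univ (Finset.univ.image (ap f0)))]
        · apply Finset.sum_congr rfl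
          intro t ht
          rw [Finset.mem_image] at ht
          obtain ⟨x, _, hx⟩ := ht
          rw [ind_true ⟨x, hx⟩, one_mul]
        · intro t _ ht
          rw [ind_false, zero_mul]
          rintro ⟨x, hx⟩
          exact ht (Finset.mem_image.2 ⟨x, Finset.mem_univ _, hx⟩)
      rw [this]
      field_simp
    have hrem : Av (fun t => ind (R t) * Av (fun y => ind (gd a y ∈ Y) * g (Sum.elim t y))) ≤ 0 := by
      rw [hRsum, Av_comm]
      apply mul_nonpos_of_nonneg_of_nonpos (by positivity)
      apply Av_nonpos
      intro y
      rw [Av_mul]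
      apply mul_nonpos_of_nonneg_of_nonpos (ind_nonneg _)
      have := hsub (Sum.elim f0 (fun i => Sum.inl (y i))) (fun e => by
        obtain ⟨i, hi⟩ := hpr e
        exact ⟨Sum.inl i, by simp [hi]⟩)
      refine le_of_eq_of_le ?_ this
      congr 1
      funext x
      congr 1
      funext i
      cases i <;> rfl
    have hremd : θ ≤ Av (fun t => ind (R t) * Av (fun y : ι → Option α => ind (gd a y ∈ Y))) := by
      rw [hRsum, Av_const]
      have h2 : (1 : ℝ) ≤ Nat.card (η → Option α) := by exact_mod_cast Nat.card_pos
      calc θ ≤ ε / 2 / K / N := min_le_right _ _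
        _ = 1 / N * (ε / 2 / K) := by ring
        _ ≤ _ := by gcongr
    have hDle : Av (fun x : κ ⊕ ι → Option α => ind (gd a x ∈ D)) ≤ 1 :=
      Av_le_one fun _ => ind_le_one _
    have hdens : Av (fun t => Av fun y => ind (gd a y ∈ D' t)) ≤
        (1 - θ) * Av (fun x : κ ⊕ ι → Option α => ind (gd a x ∈ D)) := by
      have : Av (fun x : κ ⊕ ι → Option α => ind (gd a x ∈ D)) =
          Av (fun t => Av fun y => ind (gd a y ∈ D' t)) +
          Av (fun t => ind (R t) * Av (fun y : ι → Option α => ind (gd a y ∈ Y))) := by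
        rw [Av_sum, ← Av_add]
        congr 1; funext t
        rw [← Av_mul, ← Av_add]
        congr 1; funext y
        exact hsplit t y
      nlinarith
    calc Av (fun x => ind (gd a x ∈ D) * g x)
        = Av (fun t => Av fun y => ind (gd a y ∈ D' t) * g (Sum.elim t y)) +
          Av (fun t => ind (R t) * Av (fun y => ind (gd a y ∈ Y) * g (Sum.elim t y))) := by
          rw [Av_sum, ← Av_add]
          congr 1; funext t
          rw [← Av_mul, ← Av_add]
          congr 1; funext y
          rw [hsplit t y]; ring
      _ ≤ Av (fun t => ε + (1 - θ) ^ s * Av (fun y => ind (gd a y ∈ D' t))) + 0 :=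
          add_le_add (Av_mono hfib) hrem
      _ = ε + (1 - θ) ^ s * Av (fun t => Av (fun y => ind (gd a y ∈ D' t))) := by
          rw [Av_add, Av_const, Av_mul, add_zero]
      _ ≤ _ := by
          rw [pow_succ, mul_assoc]
          gcongr

lemma part {α η : Type} [Finite α] [Finite η] (hM : ∀ δ > 0, MDHJ α η δ) (a : α)
    (ε : ℝ) (hε : 0 < ε) : ∃ (ι : Type) (_ : Finite ι),
      ∀ (D : Set (ι → α)) (g : (ι → Option α) → ℝ), (∀ x, g x ≤ 1) →
      (∀ f : ι → Option α ⊕ η, Pr f → Av (fun x => g (ap f x)) ≤ 0) →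
      Av (fun x => ind (gd a x ∈ D) * g x) ≤ ε := by
  obtain ⟨θ, h0, h1, h⟩ := part_step hM a (ε / 2) (by linarith)
  obtain ⟨s, hs⟩ := exists_pow_lt_of_lt_one (show (0 : ℝ) < ε / 2 by linarith)
    (show 1 - θ < 1 by linarith)
  obtain ⟨ι, i1, hι⟩ := h s
  refine ⟨ι, i1, fun D g hg hf => (hι D g hg hf).trans ?_⟩
  have : Av (fun x : ι → Option α => ind (gd a x ∈ D)) ≤ 1 := Av_le_one fun _ => ind_le_one _
  have : 0 ≤ Av (fun x : ι → Option α => ind (gd a x ∈ D)) := Av_nonneg fun _ => ind_nonneg _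
  have : 0 ≤ (1 - θ) ^ s := pow_nonneg (by linarith) _
  nlinarith

lemma inter {α η : Type} [Finite α] [Finite η]
    (hD : ∀ δ > 0, DHJ α δ) (l : List α) :
    ∀ ε : ℝ, 0 < ε → ∃ (ι : Type) (_ : Finite ι),
      ∀ (D : α → Set (ι → α)) (g : (ι → Option α) → ℝ), (∀ x, g x ≤ 1) →
      (∀ f : ι → Option α ⊕ η, Pr f → Av (fun x => g (ap f x)) ≤ 0) →
      Av g ≤ ε ∧ Av (fun x => ind (¬ ∀ a ∈ l, gd a x ∈ D a) * g x) ≤ ε := by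
  induction l with
  | nil =>
    intro ε hε
    refine ⟨η, inferInstance, fun D g hg hf => ⟨?_, ?_⟩⟩
    · have := hf Sum.inr (fun e => ⟨e, rfl⟩)
      have e : Av (fun x => g (ap Sum.inr x)) = Av g := rfl
      linarith
    · refine le_trans (Av_nonpos fun x => ?_) hε.le
      rw [ind_false (by simp), zero_mul]
  | cons a l ih =>
    intro ε hε
    obtain ⟨κ, _, hκ⟩ := ih (ε / 4) (by linarith)
    obtain ⟨ι, i1, hι⟩ := part (mdhj hD κ) a (ε / 4) (by linarith)
    have : Nonempty α := ⟨a⟩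
    refine ⟨ι, i1, fun D g hg hf => ?_⟩
    -- generic application
    have gen : ∀ (D0 : Set (ι → α)) (g' : (ι → Option α) → ℝ), (∀ x, g' x ≤ 1) →
        (∀ f : ι → Option α ⊕ κ, Pr f → Av (fun x => g' (ap f x)) ≤ ε / 4) →
        Av (fun x => ind (gd a x ∈ D0) * g' x) ≤ ε / 2 := by
      intro D0 g' hg' hf'
      have h1 := hι D0 (fun x => g' x - ε / 4) (fun x => by linarith [hg' x]) (fun f hff => by
        rw [Av_sub, Av_const]; linarith [hf' f hff])
      have h2 : Av (fun x => ind (gd a x ∈ D0) * g' x) ≤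
          Av (fun x => ind (gd a x ∈ D0) * (g' x - ε / 4) + ε / 4) := Av_mono fun x => by
        nlinarith [ind_le_one (gd a x ∈ D0)]
      rw [Av_add, Av_const] at h2
      linarith
    have sub : ∀ f : ι → Option α ⊕ κ, Pr f → Av (fun x => g (ap f x)) ≤ ε / 4 ∧
        Av (fun x => ind (¬ ∀ b ∈ l, gd b (ap f x) ∈ D b) * g (ap f x)) ≤ ε / 4 := by
      intro f hff
      have := hκ (fun b => {z | (fun i => Sum.elim (fun c => c.getD b) z (f i)) ∈ D b})
        (fun x => g (ap f x)) (fun x => hg _) (fun f' hf' => by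
          have := hf (cp f f') (Pr_cp hff hf')
          simpa only [ap_cp] using this)
      convert this using 10
      rename_i x b _
      rw [Set.mem_ofPred_eq]
      congr! 1
      funext i
      simp only [gd, ap]
      cases f i <;> rfl
    have g1 := gen (D a) g hg (fun f h => (sub f h).1)
    have g2 := gen (D a)ᶜ g hg (fun f h => (sub f h).1)
    have g3 := gen (D a) (fun x => ind (¬ ∀ b ∈ l, gd b x ∈ D b) * g x)
      (fun x => ind_mul_le_one _ (hg x)) (fun f h => (sub f h).2)
    have hc : ∀ x, ind (gd a x ∈ (D a)ᶜ) = 1 - ind (gd a x ∈ D a) := fun x => by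
      rw [← ind_not]; rfl
    constructor
    · have : Av g = Av (fun x => ind (gd a x ∈ D a) * g x) +
        Av (fun x => ind (gd a x ∈ (D a)ᶜ) * g x) := by
        rw [← Av_add]; congr 1; funext x; rw [hc]; ring
      linarith
    · have : Av (fun x => ind (¬ ∀ b ∈ a :: l, gd b x ∈ D b) * g x) =
        Av (fun x => ind (gd a x ∈ (D a)ᶜ) * g x) +
        Av (fun x => ind (gd a x ∈ D a) * (ind (¬ ∀ b ∈ l, gd b x ∈ D b) * g x)) := by
        rw [← Av_add]; congr 1; funext x
        rw [hc, ind_not, ind_not, List.forall_mem_cons, ind_and]; ring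
      linarith

lemma Av_rot {X Y W : Type*} [Finite X] [Finite Y] [Finite W] (f : X → Y → W → ℝ) :
    Av (fun x => Av fun y => Av fun z => f x y z) =
    Av (fun y => Av fun z => Av fun x => f x y z) := by
  rw [Av_comm]
  congr 1; funext y
  rw [Av_comm]

lemma inv_le_Av {K : Type*} [Finite K] {Q : K → Prop} (h : ∃ k, Q k) :
    1 / (Nat.card K : ℝ) ≤ Av fun k => ind (Q k) := by
  have := Fintype.ofFinite K
  obtain ⟨k, hk⟩ := h
  rw [Av_eq, Nat.card_eq_fintype_card]
  gcongr
  calc (1 : ℝ) = ind (Q k) := (ind_true hk).symm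
    _ ≤ _ := Finset.single_le_sum (f := fun k => ind (Q k)) (fun i _ => ind_nonneg _)
      (Finset.mem_univ k)

/-- mixing a word with constants -/
def Qm {κ μ α : Type*} (q : κ × μ → Option α) (y : κ → Option α) : (κ × μ) ⊕ κ → Option α :=
  Sum.elim (fun p => (q p).or (y p.1)) y

lemma gd_Qm {κ μ α : Type*} (q : κ × μ → Option α) (y : κ → Option α) (a : α) :
    (fun i => some (gd a (Qm q y) i)) = Qm q (fun i => some ((y i).getD a)) := by
  funext i
  rcases i with p | j
  · simp only [gd, Qm, Sum.elim_inl]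
    cases q p <;> rfl
  · rfl

lemma line_of {I α : Type*} {A : Set (I → Option α)} {x : I → Option α} (hx : ∃ i, x i = none)
    (hA : x ∈ A) (h : ∀ a, (fun i => some (gd a x i)) ∈ A) : HasLine A := by
  refine ⟨fun i => (x i).elim none (fun b => some (some b)), ?_, ?_⟩
  · obtain ⟨i, hi⟩ := hx
    exact ⟨i, by simp [hi]⟩
  · intro b
    rcases b with _ | a
    · convert hA using 1
      funext i
      beta_reduce
      cases x i <;> rfl
    · convert h a using 1
      funext i
      simp only [gd]
      cases x i <;> rfl

lemma upper {α κ μ η N : Type} [Finite α] [Finite κ] [Finite μ] [Finite η] [Finite N]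
    (l : List α) (ε δ : ℝ) (hδ : 0 ≤ δ)
    (hμ : ∀ (D : α → Set (μ → α)) (g : (μ → Option α) → ℝ), (∀ x, g x ≤ 1) →
      (∀ f : μ → Option α ⊕ η, Pr f → Av (fun x => g (ap f x)) ≤ 0) →
      Av g ≤ ε ∧ Av (fun x => ind (¬ ∀ a ∈ l, gd a x ∈ D a) * g x) ≤ ε)
    (hη : ∀ A : Set (η → Option α), δ ≤ Av (fun x => ind (x ∈ A)) → HasLine A)
    (A : Set (N → Option α)) (hno : ¬ HasLine A)
    (V : N → Option α ⊕ ((κ × μ) ⊕ κ)) (hV : Pr V) (B : Set ((κ × μ) ⊕ κ → α))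
    (y : κ → Option α) (hy : ∃ j, y j = none) :
    Av (fun q : κ × μ → Option α => ind (¬ ∀ a ∈ l, gd a (Qm q y) ∈ B) *
      (ind (ap V (Qm q y) ∈ A) - δ)) ≤ ε := by
  classical
  obtain ⟨j0, hj0⟩ := hy
  rw [← Av_resample (Ω' := μ → Option α) (fun q u p => if p.1 = j0 then u p.2 else q p)
    (fun q b => q (j0, b)) (by intro q u; simp) (by
      rintro q u; funext ⟨j, b⟩; by_cases h : j = j0 <;> simp [h])]
  apply Av_le
  intro q
  let U : (κ × μ) ⊕ κ → Option α ⊕ μ := Sum.elim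
    (fun p => if p.1 = j0 then Sum.inr p.2 else Sum.inl ((q p).or (y p.1)))
    (fun j => Sum.inl (y j))
  have hU : Pr U := fun e => ⟨Sum.inl (j0, e), by simp [U]⟩
  have hUa : ∀ u, ap U u = Qm (fun p => if p.1 = j0 then u p.2 else q p) y := by
    intro u
    funext i
    rcases i with ⟨j, b⟩ | j
    · by_cases h : j = j0
      · subst h; simp [ap, U, Qm, hj0]
      · simp [ap, U, Qm, h]
    · rfl
  simp only [← hUa]
  have hgd : ∀ a u, gd a (ap U u) = fun i => Sum.elim (fun c => c.getD a) (gd a u) (U i) := by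
    intro a u
    funext i
    simp only [gd, ap]
    cases U i <;> rfl
  have := (hμ (fun a => {z | (fun i => Sum.elim (fun c => c.getD a) z (U i)) ∈ B})
    (fun u => ind (ap V (ap U u) ∈ A) - δ)
    (fun u => by linarith [ind_le_one (ap V (ap U u) ∈ A)]) ?_).2
  · simp only [hgd]
    exact this
  · intro f hf
    by_contra hc
    push Not at hc
    rw [Av_sub, Av_const] at hc
    apply hno
    apply HasLine.comp (Pr_cp hV (Pr_cp hU hf))
    apply hη
    simp only [Set.mem_ofPred_eq, ap_cp]
    linarith

lemma increment {α : Type} [Finite α] [Nonempty α] (hD : ∀ δ > 0, DHJ α δ) (δ0 : ℝ)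
    (h0 : 0 < δ0) (h1 : δ0 ≤ 1) :
    ∃ γ : ℝ, 0 < γ ∧ ∀ δ, δ0 ≤ δ → DHJ (Option α) (δ + γ) → DHJ (Option α) δ := by
  obtain ⟨κ, _, hκ⟩ := hD (δ0 / 2) (by linarith)
  let Λ := {y : κ → Option α // ∃ j, y j = none}
  have hΛ : Nonempty Λ := by
    obtain ⟨f, hf, _⟩ := hκ Set.univ (by
      simp only [Set.mem_univ, ind_true, Av_const]; linarith)
    exact ⟨⟨f, hf⟩⟩
  set K : ℝ := (Nat.card Λ : ℝ) with hK
  have hK1 : 1 ≤ K := by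
    rw [hK]; exact_mod_cast Nat.card_pos
  set c : ℝ := δ0 / 4 / K with hc
  have hc0 : 0 < c := by positivity
  have hc1 : c ≤ δ0 / 4 := div_le_self (by linarith) hK1
  have hcK : c = 1 / K * (δ0 / 4) := by rw [hc]; ring
  set ε : ℝ := δ0 * c / 8 with hε
  have hε0 : 0 < ε := by positivity
  have hε1 : ε ≤ δ0 / 4 := by nlinarith
  refine ⟨ε, hε0, ?_⟩
  rintro δ hδ ⟨η, _, hη⟩
  have := Fintype.ofFinite α
  obtain ⟨μ, _, hμ⟩ := inter (η := η) hD (Finset.univ : Finset α).toList (4 * ε) (by linarith)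
  obtain ⟨N, Ω, _, _, _, V, hV, hV'⟩ := sprinkle (Option α) ((κ × μ) ⊕ κ) ε hε0
  refine ⟨N, inferInstance, fun A hA => ?_⟩
  by_contra hno
  let B : Ω → Set ((κ × μ) ⊕ κ → α) := fun ω => {x | ap (V ω) (fun i => some (x i)) ∈ A}
  let C : Ω → ((κ × μ) ⊕ κ → Option α) → Prop := fun ω x =>
    ∀ a ∈ (Finset.univ : Finset α).toList, gd a x ∈ B ω
  have hline : ∀ (q : κ × μ → Option α) (ω : Ω) (y : Λ), C ω (Qm q y.1) →
      ap (V ω) (Qm q y.1) ∉ A := by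
    intro q ω y hC hin
    apply hno
    apply HasLine.comp (hV ω)
    apply line_of (x := Qm q y.1) _ hin
    · intro a
      exact hC a (by simp)
    · obtain ⟨j, hj⟩ := y.2
      exact ⟨Sum.inr j, hj⟩
  have f1 : ∀ (q : κ × μ → Option α) (y : κ → Option α),
      δ - ε ≤ Av fun ω => ind (ap (V ω) (Qm q y) ∈ A) := by
    intro q y
    have := hV' (Qm q y) A
    linarith
  let d : (κ × μ → Option α) → Ω → ℝ := fun q ω =>
    Av fun t : κ → α => ind (ap (V ω) (Qm q (fun i => some (t i))) ∈ A)
  have f2 : ∀ q ω, 1 / K * (d q ω - δ0 / 2) ≤ Av fun y : Λ => ind (C ω (Qm q y.1)) := by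
    intro q ω
    have hd1 : d q ω ≤ 1 := Av_le_one fun _ => ind_le_one _
    by_cases hd : δ0 / 2 ≤ d q ω
    · obtain ⟨f, hf, hfA⟩ := hκ {t | ap (V ω) (Qm q (fun i => some (t i))) ∈ A} hd
      refine le_trans ?_ (inv_le_Av ⟨⟨f, hf⟩, ?_⟩)
      · rw [← hK]
        refine mul_le_of_le_one_right (by positivity) (by linarith)
      · intro a _
        have := hfA a
        rw [Set.mem_ofPred_eq] at this
        show ap (V ω) _ ∈ A
        rw [gd_Qm]
        exact this
    · refine le_trans ?_ (Av_nonneg fun _ => ind_nonneg _)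
      exact mul_nonpos_of_nonneg_of_nonpos (by positivity) (by linarith)
  have f3 : c ≤ Av fun q => Av fun ω => Av fun y : Λ => ind (C ω (Qm q y.1)) := by
    have h3 : ∀ q, c ≤ Av fun ω => Av fun y : Λ => ind (C ω (Qm q y.1)) := by
      intro q
      refine le_trans ?_ (Av_mono (f2 q))
      rw [Av_mul, Av_sub, Av_const, hcK]
      have : δ - ε ≤ Av (fun ω => d q ω) := by
        simp only [d]
        rw [Av_comm]
        exact le_Av fun t => f1 q _
      gcongr
      linarith
    exact le_Av h3
  have f4 : δ - ε ≤ Av fun q => Av fun ω => Av fun y : Λ => ind (ap (V ω) (Qm q y.1) ∈ A) := by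
    apply le_Av
    intro q
    rw [Av_comm]
    exact le_Av fun y => f1 q _
  have f5 : Av (fun q => Av fun ω => Av fun y : Λ => ind (¬ C ω (Qm q y.1)) *
      (ind (ap (V ω) (Qm q y.1) ∈ A) - (δ + ε))) ≤ 4 * ε := by
    rw [Av_rot]
    apply Av_le
    intro ω
    apply Av_le
    intro y
    exact upper _ (4 * ε) (δ + ε) (by linarith) hμ hη A hno (V ω) (hV ω) (B ω) y.1 y.2
  have f6 : ∀ q ω (y : Λ), ind (¬ C ω (Qm q y.1)) * (ind (ap (V ω) (Qm q y.1) ∈ A) - (δ + ε))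
      = ind (ap (V ω) (Qm q y.1) ∈ A) + (δ + ε) * ind (C ω (Qm q y.1)) - (δ + ε) := by
    intro q ω y
    rw [ind_not]
    by_cases h : C ω (Qm q y.1)
    · rw [ind_true h, ind_false (hline q ω y h)]; ring
    · rw [ind_false h]; ring
  simp only [f6, Av_sub, Av_add, Av_mul, Av_const] at f5
  have : (δ + ε) * c ≤ (δ + ε) * Av fun q => Av fun ω => Av fun y : Λ => ind (C ω (Qm q y.1)) := by
    gcongr
    linarith
  nlinarith

lemma dhj_option {α : Type} [Finite α] [Nonempty α] (hD : ∀ δ > 0, DHJ α δ) :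
    ∀ δ > 0, DHJ (Option α) δ := by
  have big : ∀ δ > 1, DHJ (Option α) δ := fun δ hδ => ⟨Empty, inferInstance, fun A hA => by
    have : Av (fun x => ind (x ∈ A)) ≤ 1 := Av_le_one fun _ => ind_le_one _
    linarith⟩
  intro δ hδ
  by_cases h1 : δ ≤ 1
  swap
  · exact big δ (by linarith)
  obtain ⟨γ, hγ, h⟩ := increment hD δ hδ h1
  have key : ∀ n : ℕ, ∀ δ', δ ≤ δ' → 1 < δ' + n * γ → DHJ (Option α) δ' := by
    intro n
    induction n with
    | zero => intro δ' _ h2; exact big δ' (by simpa using h2)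
    | succ n ih =>
      intro δ' h2 h3
      apply h δ' h2
      apply ih _ (by linarith)
      push_cast at h3
      linarith
  obtain ⟨n, hn⟩ := exists_nat_gt (1 / γ)
  rw [div_lt_iff₀ hγ] at hn
  exact key n δ le_rfl (by linarith)

lemma dhj_equiv {α β : Type} [Finite α] [Finite β] (e : α ≃ β) {δ : ℝ} (h : DHJ α δ) :
    DHJ β δ := by
  obtain ⟨ι, _, hι⟩ := h
  refine ⟨ι, inferInstance, fun A hA => ?_⟩
  obtain ⟨f, ⟨i, hi⟩, hf⟩ := hι {x | (fun i => e (x i)) ∈ A} (by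
    rw [← Av_equiv (Equiv.arrowCongr (Equiv.refl ι) e)] at hA
    exact hA)
  refine ⟨fun i => (f i).map e, ⟨i, by simp [hi]⟩, fun b => ?_⟩
  have := hf (e.symm b)
  rw [Set.mem_ofPred_eq] at this
  convert this using 1
  funext i
  beta_reduce
  cases f i <;> simp

lemma dhj_fin (k : ℕ) : ∀ δ > 0, DHJ (Fin (k + 1)) δ := by
  induction k with
  | zero =>
    intro δ hδ
    refine ⟨Unit, inferInstance, fun A hA => ⟨fun _ => none, ⟨(), rfl⟩, fun a => ?_⟩⟩
    obtain ⟨y, hy⟩ := exists_le_of_le_Av hA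
    have hy' : y ∈ A := by
      by_contra hh
      rw [ind_false hh] at hy
      linarith
    convert hy'
    exact Subsingleton.elim (α := Fin 1) _ _
  | succ k ih =>
    intro δ hδ
    exact dhj_equiv (finSuccEquiv (k + 1)).symm (dhj_option ih δ hδ)

lemma dhj (α : Type) [Finite α] [Nonempty α] : ∀ δ > 0, DHJ α δ := by
  intro δ hδ
  obtain ⟨n, ⟨e⟩⟩ := Finite.exists_equiv_fin α
  rcases n with _ | n
  · obtain ⟨a⟩ := ‹Nonempty α›
    exact (e a).elim0
  · exact dhj_equiv e.symm (dhj_fin n δ hδ)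

lemma varn (F : Type) [Field F] [Finite F] (ε : ℝ) (hε : 0 < ε) (hε1 : ε ≤ 1) :
    ∃ c : ℝ, 0 < c ∧ c ≤ 1 ∧ ∀ (W : Type) [AddCommGroup W] [Module F W] [Finite W] (S : Set W),
      ε ≤ Av (fun x => ind (x ∈ S)) →
      c ≤ Av (fun x : W => Av fun y : W => ind (∀ a : F, x + a • y ∈ S)) := by
  classical
  obtain ⟨ι, _, hι⟩ := dhj F (ε / 2) (by linarith)
  have := Fintype.ofFinite ι
  let Λ := {y : ι → Option F // ∃ j, y j = none}
  have hΛ : Nonempty Λ := by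
    obtain ⟨f, hf, _⟩ := hι Set.univ (by
      simp only [Set.mem_univ, ind_true, Av_const]; linarith)
    exact ⟨⟨f, hf⟩⟩
  set K : ℝ := (Nat.card Λ : ℝ) with hK
  have hK1 : 1 ≤ K := by
    rw [hK]; exact_mod_cast Nat.card_pos
  refine ⟨1 / K * (ε / 2), by positivity, ?_, ?_⟩
  · have : 1 / K ≤ 1 := by rw [div_le_one (by linarith)]; exact hK1
    nlinarith
  intro W _ _ _ S hS
  let d : (ι → W) → W → ℝ := fun v x => Av fun t : ι → F => ind (x + ∑ j, t j • v j ∈ S)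
  have f2 : ∀ v x, 1 / K * (d v x - ε / 2) ≤
      Av fun l : Λ => ind (∀ a : F, x + ∑ j, (l.1 j).getD a • v j ∈ S) := by
    intro v x
    have hd1 : d v x ≤ 1 := Av_le_one fun _ => ind_le_one _
    by_cases hd : ε / 2 ≤ d v x
    · obtain ⟨f, hf, hfA⟩ := hι {t | x + ∑ j, t j • v j ∈ S} hd
      refine le_trans ?_ (inv_le_Av ⟨⟨f, hf⟩, ?_⟩)
      · rw [← hK]
        refine mul_le_of_le_one_right (by positivity) (by linarith)
      · intro a
        exact hfA a
    · refine le_trans ?_ (Av_nonneg fun _ => ind_nonneg _)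
      exact mul_nonpos_of_nonneg_of_nonpos (by positivity) (by linarith)
  have f3 : 1 / K * (ε / 2) ≤ Av fun v : ι → W => Av fun x : W => Av fun l : Λ =>
      ind (∀ a : F, x + ∑ j, (l.1 j).getD a • v j ∈ S) := by
    apply le_Av
    intro v
    refine le_trans ?_ (Av_mono (f2 v))
    rw [Av_mul, Av_sub, Av_const]
    have : ε ≤ Av (fun x => d v x) := by
      simp only [d]
      rw [Av_comm]
      apply le_Av
      intro t
      refine hS.trans (le_of_eq ?_)
      exact (Av_equiv (Equiv.addRight (∑ j, t j • v j)) (fun x => ind (x ∈ S))).symm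
    gcongr
    linarith
  rw [← Av_rot] at f3
  obtain ⟨⟨l, j0, hj0⟩, hl⟩ := exists_le_of_le_Av f3
  refine hl.trans (le_of_eq ?_)
  rw [Av_comm (fun x y : W => ind (∀ a : F, x + a • y ∈ S))]
  let H : W → ℝ := fun y => Av fun x : W => ind (∀ a : F, x + a • y ∈ S)
  let Y : (ι → W) → W := fun v => ∑ j, if l j = none then v j else 0
  have g1 : ∀ v, (Av fun x => ind (∀ a : F, x + ∑ j, (l j).getD a • v j ∈ S)) = H (Y v) := by
    intro v
    simp only [H]
    rw [← Av_equiv (Equiv.addRight (∑ j, (l j).getD 0 • v j))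
      (fun x : W => ind (∀ a : F, x + a • Y v ∈ S))]
    congr 1
    funext x
    congr 1
    refine propext (forall_congr' fun a => ?_)
    have : x + ∑ j, (l j).getD a • v j =
        (Equiv.addRight (∑ j, (l j).getD 0 • v j)) x + a • Y v := by
      rw [Equiv.coe_addRight, add_assoc]
      simp only [Y]
      rw [Finset.smul_sum, ← Finset.sum_add_distrib]
      congr 1
      apply Finset.sum_congr rfl
      intro j _
      cases l j <;> simp
    rw [this]
  simp only [g1]
  rw [← Av_update j0]
  have g2 : ∀ v : ι → W, (Av fun u => H (Y (Function.update v j0 u))) = Av H := by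
    intro v
    rw [← Av_equiv (Equiv.addRight (∑ j ∈ Finset.univ.erase j0, if l j = none then v j else 0)) H]
    congr 1
    funext u
    congr 1
    simp only [Y, Equiv.coe_addRight]
    rw [← Finset.add_sum_erase _ _ (Finset.mem_univ j0)]
    congr 1
    · simp [hj0]
    · apply Finset.sum_congr rfl
      intro j hj
      rw [Function.update_of_ne (Finset.ne_of_mem_erase hj)]
  simp only [g2, Av_const]
  rfl

lemma final (p : ℕ) (hp : Fact p.Prime) (ε : ℝ) (hε : ε ∈ Set.Ioc (0 : ℝ) 1) :
    ∃ (n1 : ℕ) (c : ℝ), 0 < n1 ∧ c ∈ Set.Ioc (0 : ℝ) 1 ∧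
    ∀ n : ℕ, n1 ≤ n → ∀ S : Finset (Fin n → ZMod p), ε * (p : ℝ) ^ n ≤ S.card →
      c * (p : ℝ) ^ (2 * n) ≤
        ((Finset.univ.filter fun xy : (Fin n → ZMod p) × (Fin n → ZMod p) =>
            xy.2 ≠ 0 ∧ ∀ lam : ZMod p, xy.1 + lam • xy.2 ∈ S).card : ℝ) := by
  obtain ⟨c, hc0, hc1, hc⟩ := varn (ZMod p) ε hε.1 hε.2
  have hp1 : (1 : ℝ) < p := by exact_mod_cast hp.out.one_lt
  obtain ⟨m, hm⟩ := pow_unbounded_of_one_lt (2 / c) hp1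
  refine ⟨m + 1, c / 2, Nat.succ_pos _, ⟨by linarith, by linarith⟩, fun n hn S hS => ?_⟩
  have hpn : (0 : ℝ) < (p : ℝ) ^ n := by positivity
  have hbig : 1 ≤ c / 2 * (p : ℝ) ^ n := by
    have : (p : ℝ) ^ m ≤ (p : ℝ) ^ n := pow_le_pow_right₀ hp1.le (by omega)
    have h2 : 2 / c ≤ (p : ℝ) ^ n := by linarith
    rw [div_le_iff₀ hc0] at h2
    linarith
  have hcard : (Fintype.card (Fin n → ZMod p) : ℝ) = (p : ℝ) ^ n := by
    simp [ZMod.card]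
  have h1 := hc (Fin n → ZMod p) (S : Set (Fin n → ZMod p)) (by
    rw [Av_eq, hcard, le_div_iff₀ hpn]
    refine hS.trans (le_of_eq ?_)
    simp [ind])
  rw [← Av_prod (fun xy : (Fin n → ZMod p) × (Fin n → ZMod p) =>
    ind (∀ a : ZMod p, xy.1 + a • xy.2 ∈ (S : Set (Fin n → ZMod p)))), Av_eq, Fintype.card_prod,
    Nat.cast_mul, hcard, le_div_iff₀ (by positivity)] at h1
  set T := Finset.univ.filter fun xy : (Fin n → ZMod p) × (Fin n → ZMod p) =>
            xy.2 ≠ 0 ∧ ∀ lam : ZMod p, xy.1 + lam • xy.2 ∈ S with hT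
  have h2 : (∑ xy : (Fin n → ZMod p) × (Fin n → ZMod p),
      ind (∀ a : ZMod p, xy.1 + a • xy.2 ∈ (S : Set (Fin n → ZMod p)))) ≤
      ∑ xy : (Fin n → ZMod p) × (Fin n → ZMod p),
        ((if xy ∈ T then (1 : ℝ) else 0) + (if xy.2 = 0 then 1 else 0)) := by
    apply Finset.sum_le_sum
    intro xy _
    by_cases h : ∀ a : ZMod p, xy.1 + a • xy.2 ∈ (S : Set (Fin n → ZMod p))
    · rw [ind_true h]
      by_cases h0 : xy.2 = 0
      · rw [if_pos h0]; split_ifs <;> norm_num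
      · have : xy ∈ T := by
          rw [hT, Finset.mem_filter]
          exact ⟨Finset.mem_univ _, h0, fun a => by exact_mod_cast h a⟩
        rw [if_pos this, if_neg h0]; norm_num
    · rw [ind_false h]; positivity
  rw [Finset.sum_add_distrib, Fintype.sum_prod_type (f := fun xy : (Fin n → ZMod p) ×
    (Fin n → ZMod p) => if xy.2 = 0 then (1 : ℝ) else 0)] at h2
  have h3 : ∑ xy, (if xy ∈ T then (1 : ℝ) else 0) = T.card := by simp
  have h4 : ∑ _x : Fin n → ZMod p, ∑ y : Fin n → ZMod p, (if y = 0 then (1 : ℝ) else 0)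
      = (p : ℝ) ^ n := by
    rw [← hcard]; simp
  rw [h3, h4] at h2
  rw [two_mul, pow_add]
  nlinarith

end VL

end VL

/-- Varnavides-type version of Szemerédi's theorem in `F_p^n`: every set of density `ε`
contains at least `c(p,ε)·p^{2n}` nontrivial lines (counted as pairs `(x,y)`, `y ≠ 0`,
with `{x + λy : λ ∈ F_p} ⊆ S`). -/
theorem varnavides_lines :
    ∀ p : ℕ, ∀ _ : Fact p.Prime, p ≠ 2 → ∀ ε : ℝ, ε ∈ Set.Ioc (0 : ℝ) 1 →
    ∃ (n1 : ℕ) (c : ℝ), 0 < n1 ∧ c ∈ Set.Ioc (0 : ℝ) 1 ∧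
    ∀ n : ℕ, n1 ≤ n → ∀ S : Finset (Fin n → ZMod p), ε * (p : ℝ) ^ n ≤ S.card →
      c * (p : ℝ) ^ (2 * n) ≤
        ((Finset.univ.filter fun xy : (Fin n → ZMod p) × (Fin n → ZMod p) =>
            xy.2 ≠ 0 ∧ ∀ lam : ZMod p, xy.1 + lam • xy.2 ∈ S).card : ℝ) := by
  intro p hp _ ε hε
  exact VL.final p hp ε hε
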